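/- Let t, s > 0 with t + s > 1, let u ∈ (Σ_t^s)'(R^m) and v ∈ (Σ_t^s)'(R^n). Then WF^{t,s}(u ⊗ v) ⊆ { (x,ξ) ∈ T*R^{m+n} \ 0 : (x',ξ') ∈ WF^{t,s}(u) ∪ {0} and (x'',ξ'') ∈ WF^{t,s}(v) ∪ {0} }, writing x = (x',x'') with x' ∈ R^m, x'' ∈ R^n and similarly for ξ. -/

import Mathlib

open Real

/-- The anisotropic `(t,s)`-Gelfand–Shilov wave front set of an ultradistribution,
expressed via its short-time Fourier transform `V` (with respect to a fixed
window): `z ∉ WF^{t,s}` iff `z = 0` or there is a neighborhood `U` of `z` such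
that for every `r > 0`, `e^{rλ} |V(λ^t x, λ^s ξ)|` is bounded over `λ > 0` and
`(x,ξ) ∈ U`. -/
def GSWaveFrontSet {F G : Type*} [NormedAddCommGroup F] [NormedSpace ℝ F]
    [NormedAddCommGroup G] [NormedSpace ℝ G] (t s : ℝ) (V : F × G → ℂ) :
    Set (F × G) :=
  {z | z ≠ 0 ∧ ¬ ∃ U : Set (F × G), IsOpen U ∧ z ∈ U ∧
    ∀ r : ℝ, 0 < r → ∃ C : ℝ, ∀ l : ℝ, 0 < l → ∀ w ∈ U,
      Real.exp (r * l) * ‖V (l ^ t • w.1, l ^ s • w.2)‖ ≤ C}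

/-- Along the anisotropic dilations, the STFT grows at most like `e^{Kλ}` on bounded sets. -/
lemma growth_aux {F : Type*} [NormedAddCommGroup F] [NormedSpace ℝ F] {t s : ℝ}
    (ht : 0 < t) (hs : 0 < s) (V : F × F → ℂ)
    (hV : ∃ C r : ℝ, 0 < C ∧ 0 < r ∧ ∀ z,
      ‖V z‖ ≤ C * Real.exp (r * (‖z.1‖ ^ (1 / t) + ‖z.2‖ ^ (1 / s)))) (R : ℝ) (hR : 0 < R) :
    ∃ C K : ℝ, 0 < C ∧ 0 < K ∧ ∀ l : ℝ, 0 < l → ∀ x ξ : F, ‖x‖ < R → ‖ξ‖ < R →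
      ‖V (l ^ t • x, l ^ s • ξ)‖ ≤ C * Real.exp (K * l) := by
  obtain ⟨C, r, hC, hr, h⟩ := hV
  refine ⟨C, r * (R ^ (1 / t) + R ^ (1 / s)), hC, by positivity, ?_⟩
  intro l hl x ξ hx hξ
  have key : ∀ (p : ℝ), 0 < p → ∀ y : F, ‖y‖ < R → ‖l ^ p • y‖ ^ (1 / p) ≤ l * R ^ (1 / p) := by
    intro p hp y hy
    have hlp : 0 ≤ l ^ p := by positivity
    rw [norm_smul, Real.norm_of_nonneg hlp, Real.mul_rpow hlp (norm_nonneg y),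
      ← Real.rpow_mul hl.le, mul_one_div_cancel hp.ne', Real.rpow_one]
    gcongr
  refine (h _).trans (mul_le_mul_of_nonneg_left (Real.exp_le_exp.mpr ?_) hC.le)
  have h1 := key t ht x hx
  have h2 := key s hs ξ hξ
  calc r * (‖l ^ t • x‖ ^ (1 / t) + ‖l ^ s • ξ‖ ^ (1 / s))
      ≤ r * (l * R ^ (1 / t) + l * R ^ (1 / s)) := by gcongr
    _ = r * (R ^ (1 / t) + R ^ (1 / s)) * l := by ring

/-- If one factor decays near its component of `z`, so does the product near `z`. -/
lemma product_aux {E F : Type*} [NormedAddCommGroup E] [NormedSpace ℝ E]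
    [NormedAddCommGroup F] [NormedSpace ℝ F] {t s : ℝ}
    (ht : 0 < t) (hs : 0 < s) (Vu : E × E → ℂ) (Vv : F × F → ℂ)
    (hVv : ∃ C r : ℝ, 0 < C ∧ 0 < r ∧ ∀ z,
      ‖Vv z‖ ≤ C * Real.exp (r * (‖z.1‖ ^ (1 / t) + ‖z.2‖ ^ (1 / s))))
    (a b : E) (c d : F) (hab : (a, b) ∉ GSWaveFrontSet t s Vu ∪ {0}) :
    ∃ U : Set (E × E), ∃ R : ℝ, IsOpen U ∧ (a, b) ∈ U ∧ ‖c‖ < R ∧ ‖d‖ < R ∧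
      ∀ r : ℝ, 0 < r → ∃ C : ℝ, ∀ l : ℝ, 0 < l → ∀ x ξ : E, (x, ξ) ∈ U → ∀ y η : F,
        ‖y‖ < R → ‖η‖ < R → Real.exp (r * l) *
          (‖Vu (l ^ t • x, l ^ s • ξ)‖ * ‖Vv (l ^ t • y, l ^ s • η)‖) ≤ C := by
  have hex : ∃ U : Set (E × E), IsOpen U ∧ (a, b) ∈ U ∧
      ∀ r : ℝ, 0 < r → ∃ C : ℝ, ∀ l : ℝ, 0 < l → ∀ w ∈ U,
      Real.exp (r * l) * ‖Vu (l ^ t • w.1, l ^ s • w.2)‖ ≤ C := by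
    by_contra hno
    by_cases h0 : (a, b) = (0 : E × E)
    · exact hab (Or.inr h0)
    · exact hab (Or.inl ⟨h0, hno⟩)
  obtain ⟨U, hU, hm, hdec⟩ := hex
  have hc := norm_nonneg c
  have hd := norm_nonneg d
  obtain ⟨C, K, hC, hK, hg⟩ := growth_aux ht hs Vv hVv (‖c‖ + ‖d‖ + 1) (by positivity)
  refine ⟨U, ‖c‖ + ‖d‖ + 1, hU, hm, by linarith, by linarith, ?_⟩
  intro r hr
  obtain ⟨B, hB⟩ := hdec (r + K) (by positivity)
  refine ⟨B * C, ?_⟩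
  intro l hl x ξ hx y η hy hη
  have h1 := hB l hl (x, ξ) hx
  have h2 := hg l hl y η hy hη
  calc Real.exp (r * l) * (‖Vu (l ^ t • x, l ^ s • ξ)‖ * ‖Vv (l ^ t • y, l ^ s • η)‖)
      ≤ Real.exp (r * l) * (‖Vu (l ^ t • x, l ^ s • ξ)‖ * (C * Real.exp (K * l))) := by gcongr
    _ = (Real.exp ((r + K) * l) * ‖Vu (l ^ t • x, l ^ s • ξ)‖) * C := by
        rw [add_mul, Real.exp_add]; ring
    _ ≤ B * C := by gcongr

/-- Tensorization (Proposition 4.4): if `u ∈ (Σ_t^s)'(ℝ^m)`, `v ∈ (Σ_t^s)'(ℝ^n)`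
have STFTs `Vu`, `Vv` (satisfying the characterizing exponential growth bounds),
and `V` is the STFT of `u ⊗ v` (so it factorizes as
`V((x',x''),(ξ',ξ'')) = Vu(x',ξ') Vv(x'',ξ'')`), then
`WF^{t,s}(u ⊗ v) ⊆ {(x,ξ) ≠ 0 : (x',ξ') ∈ WF^{t,s}(u) ∪ {0}, (x'',ξ'') ∈ WF^{t,s}(v) ∪ {0}}`. -/
theorem stmt_14 {m n : ℕ} (t s : ℝ) (ht : 0 < t) (hs : 0 < s) (hts : 1 < t + s)
    (Vu : EuclideanSpace ℝ (Fin m) × EuclideanSpace ℝ (Fin m) → ℂ)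
    (Vv : EuclideanSpace ℝ (Fin n) × EuclideanSpace ℝ (Fin n) → ℂ)
    (hVu : ∃ C r : ℝ, 0 < C ∧ 0 < r ∧ ∀ z,
      ‖Vu z‖ ≤ C * Real.exp (r * (‖z.1‖ ^ (1 / t) + ‖z.2‖ ^ (1 / s))))
    (hVv : ∃ C r : ℝ, 0 < C ∧ 0 < r ∧ ∀ z,
      ‖Vv z‖ ≤ C * Real.exp (r * (‖z.1‖ ^ (1 / t) + ‖z.2‖ ^ (1 / s))))
    (V : (EuclideanSpace ℝ (Fin m) × EuclideanSpace ℝ (Fin n)) ×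
      (EuclideanSpace ℝ (Fin m) × EuclideanSpace ℝ (Fin n)) → ℂ)
    (hV : ∀ x' x'' ξ' ξ'', V ((x', x''), (ξ', ξ'')) = Vu (x', ξ') * Vv (x'', ξ'')) :
    GSWaveFrontSet t s V ⊆
      {z | z ≠ 0 ∧ (z.1.1, z.2.1) ∈ GSWaveFrontSet t s Vu ∪ {0} ∧
        (z.1.2, z.2.2) ∈ GSWaveFrontSet t s Vv ∪ {0}} := by
  rintro z ⟨hz, hno⟩
  refine ⟨hz, ?_, ?_⟩
  · by_contra hab
    obtain ⟨U, R, hU, hm, hc, hd, h⟩ :=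
      product_aux ht hs Vu Vv hVv z.1.1 z.2.1 z.1.2 z.2.2 hab
    refine hno ⟨{w | (w.1.1, w.2.1) ∈ U ∧ ‖w.1.2‖ < R ∧ ‖w.2.2‖ < R}, ?_, ⟨hm, hc, hd⟩, ?_⟩
    · refine (hU.preimage (by fun_prop)).inter ((isOpen_lt (f := fun w : (EuclideanSpace ℝ (Fin m) × EuclideanSpace ℝ (Fin n)) ×
      (EuclideanSpace ℝ (Fin m) × EuclideanSpace ℝ (Fin n)) => ‖w.1.2‖) (g := fun _ => R)
        (by fun_prop) (by fun_prop)).inter (isOpen_lt (f := fun w : (EuclideanSpace ℝ (Fin m) × EuclideanSpace ℝ (Fin n)) ×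
      (EuclideanSpace ℝ (Fin m) × EuclideanSpace ℝ (Fin n)) => ‖w.2.2‖)
        (g := fun _ => R) (by fun_prop) (by fun_prop)))
    · intro r hr
      obtain ⟨C, hC⟩ := h r hr
      refine ⟨C, ?_⟩
      rintro l hl ⟨⟨x, y⟩, ⟨ξ, η⟩⟩ ⟨h1, h2, h3⟩
      have := hC l hl x ξ h1 y η h2 h3
      simpa only [Prod.smul_mk, hV, norm_mul] using this
  · by_contra hab
    obtain ⟨U, R, hU, hm, hc, hd, h⟩ :=
      product_aux ht hs Vv Vu hVu z.1.2 z.2.2 z.1.1 z.2.1 hab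
    refine hno ⟨{w | (w.1.2, w.2.2) ∈ U ∧ ‖w.1.1‖ < R ∧ ‖w.2.1‖ < R}, ?_, ⟨hm, hc, hd⟩, ?_⟩
    · refine (hU.preimage (by fun_prop)).inter ((isOpen_lt (f := fun w : (EuclideanSpace ℝ (Fin m) × EuclideanSpace ℝ (Fin n)) ×
      (EuclideanSpace ℝ (Fin m) × EuclideanSpace ℝ (Fin n)) => ‖w.1.1‖) (g := fun _ => R)
        (by fun_prop) (by fun_prop)).inter (isOpen_lt (f := fun w : (EuclideanSpace ℝ (Fin m) × EuclideanSpace ℝ (Fin n)) ×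
      (EuclideanSpace ℝ (Fin m) × EuclideanSpace ℝ (Fin n)) => ‖w.2.1‖)
        (g := fun _ => R) (by fun_prop) (by fun_prop)))
    · intro r hr
      obtain ⟨C, hC⟩ := h r hr
      refine ⟨C, ?_⟩
      rintro l hl ⟨⟨x, y⟩, ⟨ξ, η⟩⟩ ⟨h1, h2, h3⟩
      have := hC l hl y η h1 x ξ h2 h3
      rw [mul_comm ‖Vv _‖] at this
      simpa only [Prod.smul_mk, hV, norm_mul] using this
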